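/- Let T > 0 and let u : [0,T] × ℝ → ℝ be a bounded C¹ function with bounded spatial derivative which satisfies the nonlocal Fornberg–Whitham equation ∂ₜu + (3/2)u∂ₓu = H ∗ u(t,·) pointwise. Then for every t ∈ [0,T], sup_{x∈ℝ} |u(t,x)| ≤ e^{t} · sup_{x∈ℝ} |u(0,x)|. -/

import Mathlib

open Real Set MeasureTheory

/-- `H(x) = -(1/2) sign(x) e^{-|x|}`, the a.e. derivative of the kernel
`G(x) = (1/2) e^{-|x|}` of `(1 - ∂ₓ²)⁻¹`. -/
noncomputable def H (x : ℝ) : ℝ := -(1 / 2) * Real.sign x * Real.exp (-|x|)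

/-!
The equation transports `u` along the characteristics `X' = (3/2) u(s, X)` with source `H ∗ u`, and
`‖H‖_{L¹} = 1` bounds the source at time `t` by `sup |u(t,·)|`. Since `u` is bounded and `C¹`, a
characteristic through any point exists on all of `[0, T]`, so a function `B` with
`B(0) ≥ sup |u(0,·)|` and `B'(t) ≥ sup |(H ∗ u)(t,·)|` dominates `|u|`. Starting from the a priori
bound `|u(t,x)| ≤ A eᵗ + M e²ᵗ`, with `A = sup |u(0,·)|` and `M = sup |u|`, this comparison can be
iterated, and each round halves the coefficient of `e²ᵗ`. The iteration replaces Grönwall's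
inequality for `t ↦ sup |u(t,·)|`, whose regularity is never needed.
-/

section Kernel

theorem norm_integral_sub_smul_le {G F : Type*} [AddGroup G] [MeasurableSpace G] [MeasurableAdd G]
    [MeasurableNeg G] {μ : Measure G} [μ.IsNegInvariant] [μ.IsAddLeftInvariant]
    [NormedAddCommGroup F] [NormedSpace ℝ F] {k : G → ℝ} {f : G → F} {C : ℝ}
    (hk : Integrable (fun z => |k z|) μ) (hf : ∀ y, ‖f y‖ ≤ C) (x : G) :
    ‖∫ y, k (x - y) • f y ∂μ‖ ≤ (∫ z, |k z| ∂μ) * C := by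
  calc ‖∫ y, k (x - y) • f y ∂μ‖ ≤ ∫ y, |k (x - y)| * C ∂μ := by
        refine norm_integral_le_of_norm_le ((hk.comp_sub_left x).mul_const C)
          (ae_of_all μ fun y => ?_)
        rw [norm_smul, Real.norm_eq_abs]
        gcongr
        exact hf y
    _ = (∫ z, |k z| ∂μ) * C := by
        rw [integral_mul_const, integral_sub_left_eq_self (fun z => |k z|)]

theorem abs_H {x : ℝ} (hx : x ≠ 0) : |H x| = 1 / 2 * exp (-|x|) := by
  rcases Real.sign_apply_eq_of_ne_zero x hx with h | h <;> simp [H, h, abs_mul]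

theorem integral_abs_H : ∫ x, |H x| = 1 := by
  calc ∫ x, |H x| = ∫ x : ℝ, 1 / 2 * exp (-|x|) :=
        integral_congr_ae ((Measure.ae_ne volume 0).mono fun _ hx => abs_H hx)
    _ = 1 := by
        rw [integral_const_mul, integral_comp_abs (f := fun x => exp (-x)),
          integral_exp_neg_Ioi_zero]
        norm_num

theorem integrable_abs_H : Integrable fun x => |H x| :=
  .of_integral_ne_zero (integral_abs_H.trans_ne one_ne_zero)

theorem abs_integral_H_sub_mul_le {f : ℝ → ℝ} {C : ℝ} (hf : ∀ y, |f y| ≤ C) (x : ℝ) :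
    |∫ y, H (x - y) * f y| ≤ C := by
  simpa only [integral_abs_H, one_mul, smul_eq_mul, Real.norm_eq_abs] using
    norm_integral_sub_smul_le (f := f) integrable_abs_H hf x

end Kernel

section Transport

variable {E F : Type*} [NormedAddCommGroup E] [NormedSpace ℝ E] [NormedAddCommGroup F]
  [NormedSpace ℝ F] {v : ℝ → E → E} {u f : ℝ → E → F} {A C K M T : ℝ}

theorem exists_integralCurve_Icc_of_contDiff_of_norm_le [ProperSpace E] {a b t : ℝ}
    (hv : ContDiff ℝ 1 (Function.uncurry v)) (hvM : ∀ s ∈ Icc a b, ∀ x, ‖v s x‖ ≤ M)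
    (ht : t ∈ Icc a b) (x : E) :
    ∃ X : ℝ → E, X t = x ∧ ∀ s ∈ Icc a b, HasDerivWithinAt X (v s (X s)) (Icc a b) s := by
  have hM : 0 ≤ M := (norm_nonneg _).trans (hvM t ht x)
  have hab : 0 ≤ b - a := sub_nonneg.2 (ht.1.trans ht.2)
  -- Curves through `x` of speed at most `M` stay in this ball during `[a, b]`.
  let R : NNReal := ⟨M * (b - a), mul_nonneg hM hab⟩
  obtain ⟨L, hL⟩ := hv.locallyLipschitz.locallyLipschitzOn.exists_lipschitzOnWith_of_compact
    ((isCompact_Icc (a := a) (b := b)).prod (isCompact_closedBall x (R : ℝ)))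
  have hPL : IsPicardLindelof v ⟨t, ht⟩ x R 0 ⟨M, hM⟩ L :=
    { lipschitzOnWith := fun s hs => mul_one L ▸
        hL.comp (LipschitzWith.prodMk_left s).lipschitzOnWith fun y hy => ⟨hs, hy⟩
      continuousOn := fun y _ =>
        (hv.continuous.comp (continuous_id.prodMk continuous_const)).continuousOn
      norm_le := fun s hs y _ => hvM s hs y
      mul_max_le := by
        simp only [NNReal.coe_zero, sub_zero]
        exact mul_le_mul_of_nonneg_left
          (max_le (sub_le_sub_left ht.1 b) (sub_le_sub_right ht.2 a)) hM }
  exact hPL.exists_eq_forall_mem_Icc_hasDerivWithinAt₀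

theorem hasDerivWithinAt_comp_curve {X : ℝ → E} {X' : E} {s : ℝ} {S : Set ℝ}
    (hu : DifferentiableAt ℝ (Function.uncurry u) (s, X s)) (hX : HasDerivWithinAt X X' S s) :
    HasDerivWithinAt (fun r => u r (X r))
      (deriv (fun r => u r (X s)) s + fderiv ℝ (u s) (X s) X') S s := by
  set D := fderiv ℝ (Function.uncurry u) (s, X s)
  have htime : deriv (fun r => u r (X s)) s = D (1, 0) :=
    (hu.hasFDerivAt.comp_hasDerivAt (f := fun r => (r, X s)) s
      ((hasDerivAt_id s).prodMk (hasDerivAt_const s (X s)))).deriv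
  have hspace : fderiv ℝ (u s) (X s) X' = D (0, X') :=
    DFunLike.congr_fun
      (hu.hasFDerivAt.comp (X s) (hasFDerivAt_prodMk_right s (X s))).fderiv X'
  have hcurve : HasDerivWithinAt (fun r => u r (X r)) (D (1, X')) S s :=
    hu.hasFDerivAt.comp_hasDerivWithinAt (f := fun r => (r, X r)) s
      ((hasDerivWithinAt_id s S).prodMk hX)
  rwa [htime, hspace, ← map_add, Prod.mk_add_mk, add_zero, zero_add]

/-- `u` solves the transport equation `∂ₜu + (v · ∇)u = f` at the times in `S`. Since `deriv` and
`fderiv` are total functions, this says nothing about the differentiability of `u`, which has to be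
assumed alongside. -/
def IsTransportSolution (v : ℝ → E → E) (u f : ℝ → E → F) (S : Set ℝ) : Prop :=
  ∀ t ∈ S, ∀ x, deriv (fun s => u s x) t + fderiv ℝ (u t) x (v t x) = f t x

theorem IsTransportSolution.norm_le_of_norm_source_le_deriv [ProperSpace E]
    (hsol : IsTransportSolution v u f (Icc 0 T))
    (hu : Differentiable ℝ (Function.uncurry u)) (hv : ContDiff ℝ 1 (Function.uncurry v))
    (hvM : ∀ t ∈ Icc 0 T, ∀ x, ‖v t x‖ ≤ M) {B B' : ℝ → ℝ} (hB : ∀ t, HasDerivAt B (B' t) t)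
    (hinit : ∀ x, ‖u 0 x‖ ≤ B 0) (hf : ∀ t ∈ Icc 0 T, ∀ x, ‖f t x‖ ≤ B' t) :
    ∀ t ∈ Icc 0 T, ∀ x, ‖u t x‖ ≤ B t := by
  intro t ht x
  obtain ⟨X, rfl, hX⟩ := exists_integralCurve_Icc_of_contDiff_of_norm_le hv hvM ht x
  have hderiv : ∀ s ∈ Icc 0 T, HasDerivWithinAt (fun r => u r (X r)) (f s (X s)) (Icc 0 T) s :=
    fun s hs => hsol s hs (X s) ▸ hasDerivWithinAt_comp_curve (hu _) (hX s hs)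
  exact image_norm_le_of_norm_deriv_right_le_deriv_boundary
    (fun s hs => (hderiv s hs).continuousWithinAt)
    (fun s hs => (hderiv s (Ico_subset_Icc_self hs)).mono_of_mem_nhdsWithin
      (Icc_mem_nhdsGE_of_mem hs))
    (hinit (X 0)) hB (fun s hs => hf s (Ico_subset_Icc_self hs) (X s)) ht

/-- The barrier `A e^{Kt} + C e^{2Kt}` dominating a solution with initial bound `A` whose source is
at most `K` times its sup-norm. The rate `2K`, twice that of the target bound `A e^{Kt}`, makes every
comparison halve `C`. -/
noncomputable def expBarrier (K A C t : ℝ) : ℝ := A * exp (K * t) + C * exp (2 * K * t)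

theorem hasDerivAt_expBarrier_half (K A C t : ℝ) :
    HasDerivAt (expBarrier K A (C / 2)) (K * expBarrier K A C t) t := by
  have hexp (c : ℝ) : HasDerivAt (fun s => exp (c * s)) (exp (c * t) * c) t := by
    simpa using ((hasDerivAt_id t).const_mul c).exp
  refine (((hexp K).const_mul A).add ((hexp (2 * K)).const_mul (C / 2))).congr_deriv ?_
  rw [expBarrier]
  ring

theorem le_expBarrier_zero (K A : ℝ) (hC : 0 ≤ C) : A ≤ expBarrier K A C 0 := by
  simpa [expBarrier] using hC

theorem le_expBarrier {t : ℝ} (hK : 0 ≤ K) (hA : 0 ≤ A) (hC : 0 ≤ C) (ht : 0 ≤ t) :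
    C ≤ expBarrier K A C t :=
  (le_mul_of_one_le_right hC (one_le_exp (by positivity))).trans
    (le_add_of_nonneg_left (by positivity))

theorem tendsto_expBarrier_div_two_pow (K A C t : ℝ) :
    Filter.Tendsto (fun n : ℕ => expBarrier K A (C / 2 ^ n) t) Filter.atTop
      (nhds (A * exp (K * t))) := by
  have hC : Filter.Tendsto (fun n : ℕ => C / 2 ^ n) Filter.atTop (nhds 0) :=
    tendsto_const_nhds.div_atTop (tendsto_pow_atTop_atTop_of_one_lt one_lt_two)
  simpa [expBarrier] using (hC.mul_const (exp (2 * K * t))).const_add (A * exp (K * t))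

theorem IsTransportSolution.norm_le_mul_exp [ProperSpace E]
    (hsol : IsTransportSolution v u f (Icc 0 T))
    (hu : Differentiable ℝ (Function.uncurry u)) (hv : ContDiff ℝ 1 (Function.uncurry v))
    (hvM : ∃ M, ∀ t ∈ Icc 0 T, ∀ x, ‖v t x‖ ≤ M) (huM : ∃ M, ∀ t ∈ Icc 0 T, ∀ x, ‖u t x‖ ≤ M)
    (hK : 0 ≤ K) (hf : ∀ t ∈ Icc 0 T, ∀ C, (∀ y, ‖u t y‖ ≤ C) → ∀ x, ‖f t x‖ ≤ K * C)
    (hA : ∀ x, ‖u 0 x‖ ≤ A) : ∀ t ∈ Icc 0 T, ∀ x, ‖u t x‖ ≤ A * exp (K * t) := by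
  obtain ⟨N, hN⟩ := hvM
  obtain ⟨M, hM⟩ := huM
  intro t ht x
  have hA0 : 0 ≤ A := (norm_nonneg _).trans (hA x)
  have hM0 : 0 ≤ M := (norm_nonneg _).trans (hM t ht x)
  have hiter (n : ℕ) : ∀ s ∈ Icc 0 T, ∀ y, ‖u s y‖ ≤ expBarrier K A (M / 2 ^ n) s := by
    induction n with
    | zero =>
      intro s hs y
      simpa using (hM s hs y).trans (le_expBarrier hK hA0 hM0 hs.1)
    | succ n ih =>
      rw [pow_succ, ← div_div]
      exact hsol.norm_le_of_norm_source_le_deriv hu hv hN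
        (hasDerivAt_expBarrier_half K A (M / 2 ^ n))
        (fun y => (hA y).trans (le_expBarrier_zero K A (by positivity)))
        (fun s hs y => hf s hs _ (ih s hs) y)
  exact ge_of_tendsto' (tendsto_expBarrier_div_two_pow K A M t) fun n => hiter n t ht x

end Transport

theorem FW_sup_growth_general {T : ℝ} {u : ℝ → ℝ → ℝ}
    (hu_smooth : ContDiff ℝ 1 (Function.uncurry u))
    (hu_bdd : ∃ M : ℝ, ∀ t ∈ Icc 0 T, ∀ x, |u t x| ≤ M)
    (hFW : ∀ t ∈ Icc 0 T, ∀ x,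
      deriv (fun s => u s x) t + (3 / 2) * u t x * deriv (u t) x = ∫ y, H (x - y) * u t y) :
    ∀ t ∈ Icc 0 T, (⨆ x, |u t x|) ≤ exp t * ⨆ x, |u 0 x| := by
  intro t ht
  have hsol : IsTransportSolution (fun t x => 3 / 2 * u t x) u
      (fun t x => ∫ y, H (x - y) * u t y) (Icc 0 T) := fun s hs x => by
    rw [fderiv_eq_smul_deriv, smul_eq_mul, hFW s hs x]
  have hvelocity : ∃ N, ∀ s ∈ Icc 0 T, ∀ x, ‖3 / 2 * u s x‖ ≤ N := by
    obtain ⟨M, hM⟩ := hu_bdd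
    refine ⟨3 / 2 * M, fun s hs x => ?_⟩
    rw [norm_mul, Real.norm_of_nonneg (by norm_num)]
    exact mul_le_mul_of_nonneg_left (hM s hs x) (by norm_num)
  have hinit (x : ℝ) : |u 0 x| ≤ ⨆ x, |u 0 x| :=
    le_ciSup (f := fun x => |u 0 x|) (hu_bdd.imp fun M hM => forall_mem_range.2 fun y =>
      hM 0 ⟨le_rfl, ht.1.trans ht.2⟩ y) x
  have hgrowth := hsol.norm_le_mul_exp (hu_smooth.differentiable one_ne_zero)
    (contDiff_const.mul hu_smooth) hvelocity hu_bdd zero_le_one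
    (fun s _ C hC x => (one_mul C).symm ▸ abs_integral_H_sub_mul_le hC x) hinit
  exact ciSup_le fun x => by simpa [mul_comm] using hgrowth t ht x

/-- For a bounded `C¹` solution `u` of the nonlocal Fornberg–Whitham equation
`∂ₜu + (3/2) u ∂ₓu = H ∗ u(t,·)` with bounded spatial derivative, the sup-norm grows at
most exponentially: `sup_x |u(t,x)| ≤ eᵗ sup_x |u(0,x)|`. -/
theorem FW_sup_growth (T : ℝ) (hT : 0 < T) (u : ℝ → ℝ → ℝ)
    (hu_smooth : ContDiff ℝ 1 (Function.uncurry u))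
    (hu_bdd : ∃ M : ℝ, ∀ t x : ℝ, |u t x| ≤ M)
    (hux_bdd : ∃ M : ℝ, ∀ t x : ℝ, |deriv (u t) x| ≤ M)
    (hFW : ∀ t ∈ Icc (0 : ℝ) T, ∀ x : ℝ,
      deriv (fun s : ℝ => u s x) t + (3 / 2) * u t x * deriv (u t) x =
        ∫ y : ℝ, H (x - y) * u t y) :
    ∀ t ∈ Icc (0 : ℝ) T, (⨆ x : ℝ, |u t x|) ≤ Real.exp t * ⨆ x : ℝ, |u 0 x| :=
  FW_sup_growth_general hu_smooth (hu_bdd.imp fun _ hM t _ => hM t) hFW
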